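/- In the spined category Grph_m of simple graphs and monomorphisms, every chordal graph is pseudo-chordal: all S-functors on Grph_m assign a chordal graph G the value ω(G), its clique number. -/

import Mathlib

open CategoryTheory


/-- A spined category: a category with a spine `Ω : ℕ → C` and a proxy pushout
operation `P`, satisfying SC1 and SC2. -/
structure SpinedStruct (C : Type*) [Category C] where
  Ω : ℕ → C
  P : ∀ {n : ℕ} {G H : C}, (Ω n ⟶ G) → (Ω n ⟶ H) → C
  inl : ∀ {n : ℕ} {G H : C} (g : Ω n ⟶ G) (h : Ω n ⟶ H), G ⟶ P g h
  inr : ∀ {n : ℕ} {G H : C} (g : Ω n ⟶ G) (h : Ω n ⟶ H), H ⟶ P g h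
  sc1 : ∀ X : C, ∃ n : ℕ, Nonempty (X ⟶ Ω n)
  sc2 : ∀ {n : ℕ} {G G' H H' : C} (g : Ω n ⟶ G) (h : Ω n ⟶ H)
      (g' : G ⟶ G') (h' : H ⟶ H'),
      ∃! m : P g h ⟶ P (g ≫ g') (h ≫ h'),
        inl g h ≫ m = g' ≫ inl (g ≫ g') (h ≫ h') ∧
        inr g h ≫ m = h' ≫ inr (g ≫ g') (h ≫ h')

/-- An S-functor on a spined category: a spinal functor to `Nat = (ℕ, ≤)`,
equivalently a monotone-under-morphisms assignment `s : ob C → ℕ` with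
`s (Ω n) = n` and `s (P g h) = max (s G) (s H)`. -/
structure SFunctor {C : Type*} [Category C] (S : SpinedStruct C) where
  s : C → ℕ
  mono : ∀ {X Y : C}, (X ⟶ Y) → s X ≤ s Y
  spine : ∀ n : ℕ, s (S.Ω n) = n
  pp : ∀ {n : ℕ} {G H : C} (g : S.Ω n ⟶ G) (h : S.Ω n ⟶ H),
      s (S.P g h) = max (s G) (s H)

/-- An object is pseudo-chordal if all S-functors agree on it. -/
def PseudoChordal {C : Type*} [Category C] (S : SpinedStruct C) (X : C) : Prop :=
  ∀ F G : SFunctor S, F.s X = G.s X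

/-- The triangulation map `Δ(G) = min { s(H) | H pseudo-chordal, C(G,H) ≠ ∅ }`. -/
noncomputable def Delta {C : Type*} [Category C] (S : SpinedStruct C)
    (s : SFunctor S) (G : C) : ℕ :=
  sInf { k | ∃ H : C, PseudoChordal S H ∧ Nonempty (G ⟶ H) ∧ s.s H = k }

/-- Bundled finite simple graphs. -/
structure Grph : Type 1 where
  V : Type
  [fin : Fintype V]
  G : SimpleGraph V

attribute [instance] Grph.fin

/-- The category of finite simple graphs and graph homomorphisms. -/
instance : Category Grph where
  Hom A B := A.G →g B.G
  id A := SimpleGraph.Hom.id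
  comp f g := g.comp f

/-- The category of finite simple graphs and graph monomorphisms. -/
def GrphM : Type 1 := Grph

instance : Category GrphM where
  Hom A B := { f : (Grph.G A) →g (Grph.G B) // Function.Injective f }
  id A := ⟨SimpleGraph.Hom.id, fun _ _ h => h⟩
  comp f g := ⟨g.1.comp f.1, g.2.comp f.2⟩

/-- The complete graph on `n` vertices, as an object of `GrphM`. -/
def Kn (n : ℕ) : GrphM := { V := Fin n, G := (⊤ : SimpleGraph (Fin n)) }

/-- The clique number of an object of `GrphM`. -/
noncomputable def cliqueNumM (A : GrphM) : ℕ := (Grph.G A).cliqueNum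

/-- A graph is chordal if every cycle on more than 3 vertices has a chord:
an edge of the graph between two vertices of the cycle that is not an edge
of the cycle. -/
def SimpleGraph.IsChordal {V : Type*} (G : SimpleGraph V) : Prop :=
  ∀ ⦃v : V⦄ (p : G.Walk v v), p.IsCycle → 3 < p.length →
    ∃ u w, u ∈ p.support ∧ w ∈ p.support ∧ G.Adj u w ∧ s(u, w) ∉ p.edges

/-!
If `G` is chordal and `x`, `y` are neighbours of `a` joined by a path through vertices that are
neither `a` nor adjacent to `a`, then a shortest such path closes up through `a` to a cycle whose
only possible chord is `xy`; hence `x` and `y` are adjacent. Therefore, if `b ≠ a` is not adjacent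
to `a`, the component of `b` among the non-neighbours of `a` has a clique as its outer boundary,
and this clique separates `b` from `a`. Iterating, `G` is assembled from complete graphs by gluing
along cliques. Each such gluing is a pushout in `Grph`, so an S-functor turns it into a maximum,
while on complete graphs it counts vertices; so its value on `G` is at most `ω(G)`. The reverse
inequality is monotonicity along the inclusion of a maximum clique.
-/

universe u

section ChordalGraphs

open SimpleGraph

variable {V W : Type*} {G : SimpleGraph V} {H : SimpleGraph W} {a x y : V}

theorem isChordless_of_length_eq_dist {p : G.Walk x y} (hp : p.length = G.dist x y) :
    p.IsChordless := by
  have consecutive {i j : ℕ} (hij : i < j) (hj : j ≤ p.length)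
      (hadj : G.Adj (p.getVert i) (p.getVert j)) : s(p.getVert i, p.getVert j) ∈ p.edges := by
    let q := (p.drop i).take (j - i)
    have hq : q.length = 1 := by
      rw [length_eq_dist_of_subwalk hp (((p.drop i).isSubwalk_take _).trans (p.isSubwalk_drop i)),
        dist_eq_one_iff_adj, Walk.drop_getVert, Nat.add_sub_cancel' hij.le]
      exact hadj
    obtain rfl : j = i + 1 := by
      simp only [q, Walk.take_length, Walk.drop_length] at hq
      omega
    exact p.mk_mem_edges_iff_exists.2 ⟨i, hj, rfl⟩
  refine Walk.isChordless_iff_forall_mem_edges.2 fun u v hu hv huv ↦ ?_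
  obtain ⟨i, rfl, hi⟩ := Walk.mem_support_iff_exists_getVert.1 hu
  obtain ⟨j, rfl, hj⟩ := Walk.mem_support_iff_exists_getVert.1 hv
  rcases lt_trichotomy i j with hij | rfl | hji
  · exact consecutive hij hj huv
  · exact (G.irrefl huv).elim
  · exact Sym2.eq_swap ▸ consecutive hji hi huv.symm

theorem isChordless_map_embedding {p : G.Walk x y} (hp : p.IsChordless) (f : G ↪g H) :
    (p.map f.toHom).IsChordless := by
  refine Walk.isChordless_iff_forall_mem_edges.2 fun u v hu hv huv ↦ ?_
  rw [Walk.support_map, List.mem_map] at hu hv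
  obtain ⟨u, hu, rfl⟩ := hu
  obtain ⟨v, hv, rfl⟩ := hv
  rw [Walk.edges_map]
  exact List.mem_map_of_mem (hp.mem_edges hu hv (f.map_adj_iff.1 huv))

theorem isCycle_cons_concat {p : G.Walk x y} (hp : p.IsPath) (ha : a ∉ p.support) (hxy : x ≠ y)
    (hax : G.Adj a x) (hya : G.Adj y a) : (Walk.cons hax (p.concat hya)).IsCycle := by
  refine (Walk.cons_isCycle_iff _ hax).2 ⟨hp.concat ha hya, ?_⟩
  rw [Walk.edges_concat, List.concat_eq_append, List.mem_append, List.mem_singleton]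
  rintro (hmem | heq)
  · exact ha (p.fst_mem_support_of_mem_edges hmem)
  · rcases Sym2.eq_iff.1 heq with ⟨hay, -⟩ | ⟨-, hxy'⟩
    · exact hya.ne hay.symm
    · exact hxy hxy'

theorem isChordless_cons_concat {p : G.Walk x y} (hp : p.IsChordless)
    (ha : ∀ v ∈ p.support, G.Adj a v → v = x ∨ v = y) (hax : G.Adj a x) (hya : G.Adj y a) :
    (Walk.cons hax (p.concat hya)).IsChordless := by
  have spoke {v : V} (hv : v ∈ p.support) (hav : G.Adj a v) :
      s(a, v) ∈ (Walk.cons hax (p.concat hya)).edges := by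
    rcases ha v hv hav with rfl | rfl <;> simp [Walk.edges_concat]
  refine Walk.isChordless_iff_forall_mem_edges.2 fun u v hu hv huv ↦ ?_
  have mem_iff (w : V) : w ∈ (Walk.cons hax (p.concat hya)).support ↔ w = a ∨ w ∈ p.support := by
    simp only [Walk.support_cons, Walk.support_concat, List.mem_cons, List.mem_append,
      List.not_mem_nil, or_false]
    tauto
  rw [mem_iff] at hu hv
  rcases hu with rfl | hu <;> rcases hv with rfl | hv
  · exact (G.irrefl huv).elim
  · exact spoke hv huv
  · exact Sym2.eq_swap ▸ spoke hu huv.symm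
  · simp [Walk.edges_concat, hp.mem_edges hu hv huv]

theorem length_le_three_of_isChordal (hG : G.IsChordal) {p : G.Walk x x} (hp : p.IsCycle)
    (hchordless : p.IsChordless) : p.length ≤ 3 := by
  by_contra! hlen
  obtain ⟨u, v, hu, hv, huv, hnot⟩ := hG p hp hlen
  exact hnot (hchordless.mem_edges hu hv huv)

theorem isChordal_of_isIndContained (hG : G.IsChordal) (h : H ⊴ G) : H.IsChordal := by
  obtain ⟨f⟩ := h
  intro v p hp hlen
  by_contra! hchord
  have hchordless : p.IsChordless :=
    Walk.isChordless_iff_forall_mem_edges.2 fun u w hu hw ↦ hchord u w hu hw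
  have := length_le_three_of_isChordal hG (hp.map f.injective)
    (isChordless_map_embedding hchordless f)
  rw [Walk.length_map] at this
  omega

theorem adj_of_isChordal_of_reachable (hG : G.IsChordal) {s : Set V} (hs : ∀ v ∈ s, ¬ G.Adj a v)
    (has : a ∉ s) (hax : G.Adj a x) (hay : G.Adj a y) (hxy : x ≠ y)
    (hreach : (G.induce (s ∪ {x, y})).Reachable ⟨x, by simp⟩ ⟨y, by simp⟩) : G.Adj x y := by
  obtain ⟨q, hq⟩ := hreach.exists_walk_length_eq_dist
  let p : G.Walk x y := q.map (Embedding.induce _).toHom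
  have hpath : p.IsPath :=
    (q.isPath_of_length_eq_dist hq).map (Embedding.induce (G := G) _).injective
  have hchordless : p.IsChordless :=
    isChordless_map_embedding (isChordless_of_length_eq_dist hq) (Embedding.induce _)
  have hsupport (v : V) (hv : v ∈ p.support) : v ∈ s ∨ v = x ∨ v = y := by
    rw [show p.support = _ from Walk.support_map _ q, List.mem_map] at hv
    obtain ⟨⟨v, hv⟩, -, rfl⟩ := hv
    exact hv
  have hap : a ∉ p.support := fun hmem ↦ by
    rcases hsupport a hmem with h | rfl | rfl
    exacts [has h, G.irrefl hax, G.irrefl hay]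
  have hlen : (Walk.cons hax (p.concat hay.symm)).length ≤ 3 :=
    length_le_three_of_isChordal hG (isCycle_cons_concat hpath hap hxy hax hay.symm)
      (isChordless_cons_concat hchordless
        (fun v hv hav ↦ (hsupport v hv).resolve_left fun h ↦ hs v h hav) hax hay.symm)
  rw [Walk.length_cons, Walk.length_concat] at hlen
  have : p.length ≠ 0 := fun h ↦ hxy (Walk.eq_of_length_eq_zero h)
  exact Walk.adj_of_length_eq_one (show p.length = 1 by omega)

/-- The outer vertex boundary of `C`: the vertices outside `C` with a neighbour in `C`. -/
def vertexBoundary (G : SimpleGraph V) (C : Set V) : Set V :=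
  {v | v ∉ C ∧ ∃ c ∈ C, G.Adj c v}

theorem isClique_vertexBoundary_of_isChordal (hG : G.IsChordal)
    (K : (G.induce (insert a (G.neighborSet a))ᶜ).ConnectedComponent) :
    G.IsClique (vertexBoundary G (Subtype.val '' K.supp)) := by
  let U : Set V := (insert a (G.neighborSet a))ᶜ
  have adj_of_mem {v : V} (hv : v ∈ vertexBoundary G (Subtype.val '' K.supp)) : G.Adj a v := by
    obtain ⟨hvK, _, ⟨c, hc, rfl⟩, hcv⟩ := hv
    by_contra hav
    have hva : v ≠ a := by
      rintro rfl
      exact c.2 (Or.inr hcv.symm)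
    have hvU : v ∈ U := by simp [U, hva, hav]
    exact hvK ⟨⟨v, hvU⟩, K.mem_supp_of_adj_mem_supp hc hcv, rfl⟩
  intro x hx y hy hxy
  refine adj_of_isChordal_of_reachable hG (s := U) (fun v hv hav ↦ hv (Or.inr hav))
    (fun ha ↦ ha (Or.inl rfl)) (adj_of_mem hx) (adj_of_mem hy) hxy ?_
  obtain ⟨-, _, ⟨c, hc, rfl⟩, hcx⟩ := hx
  obtain ⟨-, _, ⟨d, hd, rfl⟩, hdy⟩ := hy
  have hcd : (G.induce U).Reachable c d := ConnectedComponent.exact (hc.trans hd.symm)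
  have hcx' : (G.induce (U ∪ {x, y})).Adj ⟨c, Or.inl c.2⟩ ⟨x, by simp⟩ := hcx
  have hdy' : (G.induce (U ∪ {x, y})).Adj ⟨d, Or.inl d.2⟩ ⟨y, by simp⟩ := hdy
  exact hcx'.symm.reachable.trans
    ((hcd.map (G.induceHomOfLE Set.subset_union_left).toHom).trans hdy'.reachable)

/-- `(X, Y)` is a separation of `G`: the two sides cover the vertices, and no edge joins `X \ Y`
to `Y \ X`. Clique sums are the separations with `X ∩ Y` a clique. -/
structure IsSeparation (G : SimpleGraph V) (X Y : Set V) : Prop where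
  union_eq_univ : X ∪ Y = Set.univ
  mem_of_adj : ∀ ⦃u v : V⦄, G.Adj u v → (u ∈ X ∧ v ∈ X) ∨ (u ∈ Y ∧ v ∈ Y)

theorem isSeparation_union_vertexBoundary_compl (G : SimpleGraph V) (C : Set V) :
    IsSeparation G (C ∪ vertexBoundary G C) Cᶜ where
  union_eq_univ := by
    rw [Set.union_right_comm, Set.union_compl_self, Set.univ_union]
  mem_of_adj u v huv := by
    have step {u v : V} (hu : u ∈ C) (huv : G.Adj u v) : v ∈ C ∪ vertexBoundary G C :=
      (em (v ∈ C)).imp id fun hv ↦ ⟨hv, u, hu, huv⟩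
    by_cases hu : u ∈ C
    · exact Or.inl ⟨Or.inl hu, step hu huv⟩
    · by_cases hv : v ∈ C
      · exact Or.inl ⟨step hv huv.symm, Or.inl hv⟩
      · exact Or.inr ⟨hu, hv⟩

theorem exists_isSeparation_of_isChordal (hG : G.IsChordal) (hne : G ≠ ⊤) :
    ∃ X Y : Set V, IsSeparation G X Y ∧ G.IsClique (X ∩ Y) ∧ X ≠ Set.univ ∧ Y ≠ Set.univ := by
  obtain ⟨a, b, hab, hnadj⟩ := ne_top_iff_exists_not_adj.1 hne
  have hb : b ∈ (insert a (G.neighborSet a))ᶜ := by simp [hab.symm, hnadj]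
  let K := (G.induce (insert a (G.neighborSet a))ᶜ).connectedComponentMk ⟨b, hb⟩
  let C : Set V := Subtype.val '' K.supp
  have hbC : b ∈ C := ⟨⟨b, hb⟩, rfl, rfl⟩
  have haX : a ∉ C ∪ vertexBoundary G C := by
    rintro (⟨c, -, hca⟩ | ⟨-, _, ⟨c, -, rfl⟩, hca⟩)
    · exact c.2 (Or.inl hca)
    · exact c.2 (Or.inr hca.symm)
  refine ⟨_, _, isSeparation_union_vertexBoundary_compl G C, ?_,
    fun h ↦ haX (h ▸ Set.mem_univ a), fun h ↦ (h ▸ Set.mem_univ b : b ∈ Cᶜ) hbC⟩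
  exact (isClique_vertexBoundary_of_isChordal hG K).subset
    fun v hv ↦ hv.1.resolve_left hv.2

theorem isChordal_induction
    {motive : ∀ (V : Type u) [Finite V], SimpleGraph V → Prop}
    (complete : ∀ (V : Type u) [Finite V], motive V ⊤)
    (cliqueSum : ∀ (V : Type u) [Finite V] (G : SimpleGraph V) (X Y : Set V),
      IsSeparation G X Y → G.IsClique (X ∩ Y) →
      motive X (G.induce X) → motive Y (G.induce Y) → motive V G)
    {V : Type u} [Finite V] {G : SimpleGraph V} (hG : G.IsChordal) : motive V G := by
  induction hcard : Nat.card V using Nat.strong_induction_on generalizing V with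
  | _ n ih =>
    subst hcard
    rcases eq_or_ne G ⊤ with rfl | hne
    · exact complete V
    · obtain ⟨X, Y, hsep, hclique, hX, hY⟩ := exists_isSeparation_of_isChordal hG hne
      have part (Z : Set V) (hZ : Z ≠ Set.univ) : motive Z (G.induce Z) := by
        obtain ⟨z, hz⟩ := (Set.ne_univ_iff_exists_notMem Z).1 hZ
        exact ih _ (Finite.card_subtype_lt hz)
          (isChordal_of_isIndContained hG ⟨Embedding.induce Z⟩) rfl
      exact cliqueSum V G X Y hsep hclique (part X hX) (part Y hY)

end ChordalGraphs

namespace IsSeparation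

variable {V W : Type*} {G : SimpleGraph V} {H : SimpleGraph W} {X Y : Set V}

open Classical in
/-- The homomorphism on `G` glued from homomorphisms on the two sides of a separation that agree
on the overlap. -/
noncomputable def glue (h : IsSeparation G X Y) (f : G.induce X →g H) (g : G.induce Y →g H)
    (hfg : ∀ v (hX : v ∈ X) (hY : v ∈ Y), f ⟨v, hX⟩ = g ⟨v, hY⟩) : G →g H where
  toFun v := if hX : v ∈ X then f ⟨v, hX⟩ else
    g ⟨v, (h.union_eq_univ ▸ Set.mem_univ v : v ∈ X ∪ Y).resolve_left hX⟩
  map_rel' {u v} huv := by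
    rcases h.mem_of_adj huv with ⟨hu, hv⟩ | ⟨hu, hv⟩
    · have := f.map_adj (show (G.induce X).Adj ⟨u, hu⟩ ⟨v, hv⟩ from huv)
      simpa only [hu, hv, dite_true] using this
    · have := g.map_adj (show (G.induce Y).Adj ⟨u, hu⟩ ⟨v, hv⟩ from huv)
      split_ifs with hu' hv' hv' <;> simpa only [hfg, hu, hv] using this

variable (h : IsSeparation G X Y) {f : G.induce X →g H} {g : G.induce Y →g H}
  (hfg : ∀ v (hX : v ∈ X) (hY : v ∈ Y), f ⟨v, hX⟩ = g ⟨v, hY⟩)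

theorem glue_apply_left (v : X) : h.glue f g hfg v = f v :=
  dif_pos v.2

theorem glue_apply_right (v : Y) : h.glue f g hfg v = g v := by
  by_cases hX : v.1 ∈ X
  · exact (dif_pos hX).trans (hfg v hX v.2)
  · exact dif_neg hX

end IsSeparation

namespace Grph

open scoped SimpleGraph

/-- The object of `Grph` given by a graph on a finite vertex type. The enumeration of the vertices
is chosen, so that induced subgraphs need no `Fintype` instance. -/
noncomputable def of {V : Type} [Finite V] (G : SimpleGraph V) : Grph :=
  { V := V, fin := Fintype.ofFinite V, G := G }

theorem hom_ext {A B : Grph} {f g : A ⟶ B} (h : ∀ v : A.V, f.toFun v = g.toFun v) : f = g :=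
  RelHom.ext h

theorem congr_hom {A B : Grph} {f g : A ⟶ B} (h : f = g) (v : A.V) : f.toFun v = g.toFun v :=
  h ▸ rfl

theorem isContained_of_iso {A B : Grph} (e : A ≅ B) : A.G ⊑ B.G :=
  ⟨⟨e.hom, Function.LeftInverse.injective (g := e.inv.toFun) (congr_hom e.hom_inv_id)⟩⟩

/-- The inclusion of an induced subgraph, as a morphism of `Grph`. -/
def induceHom {V : Type} [Finite V] (G : SimpleGraph V) (X : Set V) :
    of (G.induce X) ⟶ of G :=
  (SimpleGraph.Embedding.induce X).toHom

/-- The inclusion between nested induced subgraphs, as a morphism of `Grph`. -/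
def induceHomOfLE {V : Type} [Finite V] (G : SimpleGraph V) {X Y : Set V} (h : X ⊆ Y) :
    of (G.induce X) ⟶ of (G.induce Y) :=
  (G.induceHomOfLE h).toHom

theorem isPushout_of_isSeparation {V : Type} [Finite V] {G : SimpleGraph V} {X Y : Set V}
    (h : IsSeparation G X Y) :
    IsPushout (induceHomOfLE G (Set.inter_subset_left : X ∩ Y ⊆ X))
      (induceHomOfLE G Set.inter_subset_right) (induceHom G X) (induceHom G Y) := by
  have agree (c : Limits.PushoutCocone (induceHomOfLE G (Set.inter_subset_left : X ∩ Y ⊆ X))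
      (induceHomOfLE G Set.inter_subset_right)) (v : V) (hX : v ∈ X) (hY : v ∈ Y) :
      c.inl.toFun ⟨v, hX⟩ = c.inr.toFun ⟨v, hY⟩ :=
    congr_hom c.condition ⟨v, hX, hY⟩
  refine ⟨⟨rfl⟩, ⟨Limits.PushoutCocone.IsColimit.mk _ (fun c ↦ h.glue c.inl c.inr (agree c))
    (fun c ↦ hom_ext (h.glue_apply_left (agree c)))
    (fun c ↦ hom_ext (h.glue_apply_right (agree c)))
    fun c m hmX hmY ↦ hom_ext fun v ↦ ?_⟩⟩
  rcases (h.union_eq_univ ▸ Set.mem_univ v : v ∈ X ∪ Y) with hX | hY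
  · exact (congr_hom hmX ⟨v, hX⟩).trans (h.glue_apply_left (agree c) ⟨v, hX⟩).symm
  · exact (congr_hom hmY ⟨v, hY⟩).trans (h.glue_apply_right (agree c) ⟨v, hY⟩).symm

end Grph

namespace GrphM

/-- The object of `GrphM` given by a graph on a finite vertex type. -/
noncomputable def of {V : Type} [Finite V] (G : SimpleGraph V) : GrphM :=
  Grph.of G

/-- The functor from `GrphM` to `Grph` that forgets injectivity of morphisms. -/
def toGrph : GrphM ⥤ Grph where
  obj A := A
  map f := f.1

/-- The inclusion between nested induced subgraphs, as a morphism of `GrphM`. -/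
def induceHomOfLE {V : Type} [Finite V] (G : SimpleGraph V) {X Y : Set V} (h : X ⊆ Y) :
    of (G.induce X) ⟶ of (G.induce Y) :=
  ⟨Grph.induceHomOfLE G h, (G.induceHomOfLE h).injective⟩

/-- An isomorphism of graphs, as an isomorphism in `GrphM`. -/
def isoOfIso {A B : GrphM} (e : Grph.G A ≃g Grph.G B) : A ≅ B where
  hom := ⟨e.toHom, e.injective⟩
  inv := ⟨e.symm.toHom, e.symm.injective⟩
  hom_inv_id := Subtype.ext (RelHom.ext e.symm_apply_apply)
  inv_hom_id := Subtype.ext (RelHom.ext e.apply_symm_apply)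

theorem nonempty_iso_Kn_card (V : Type) [Finite V] :
    Nonempty (Kn (Nat.card V) ≅ of (⊤ : SimpleGraph V)) :=
  ⟨isoOfIso (SimpleGraph.Iso.completeGraph (Finite.equivFin V).symm)⟩

end GrphM

namespace SFunctor

open scoped SimpleGraph

variable {S : SpinedStruct GrphM} (F : SFunctor S) {A B : GrphM}

theorem s_le_of_isContained (h : Grph.G A ⊑ Grph.G B) : F.s A ≤ F.s B :=
  let ⟨f⟩ := h
  F.mono ⟨f.toHom, f.injective⟩

theorem s_eq_of_iso (e : GrphM.toGrph.obj A ≅ GrphM.toGrph.obj B) : F.s A = F.s B :=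
  (F.s_le_of_isContained (Grph.isContained_of_iso e)).antisymm
    (F.s_le_of_isContained (Grph.isContained_of_iso e.symm))

theorem s_Kn (hΩ : ∀ n : ℕ, S.Ω n = Kn n) (n : ℕ) : F.s (Kn n) = n :=
  hΩ n ▸ F.spine n

theorem s_top (hΩ : ∀ n : ℕ, S.Ω n = Kn n) (V : Type) [Finite V] :
    F.s (GrphM.of (⊤ : SimpleGraph V)) = Nat.card V := by
  obtain ⟨e⟩ := GrphM.nonempty_iso_Kn_card V
  rw [← F.s_eq_of_iso (GrphM.toGrph.mapIso e), F.s_Kn hΩ]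

theorem cliqueNumM_le_s (hΩ : ∀ n : ℕ, S.Ω n = Kn n) (A : GrphM) : cliqueNumM A ≤ F.s A := by
  obtain ⟨t, ht⟩ := (Grph.G A).exists_isNClique_cliqueNum
  calc cliqueNumM A = F.s (Kn (cliqueNumM A)) := (F.s_Kn hΩ _).symm
    _ ≤ F.s A := F.s_le_of_isContained
      ((SimpleGraph.not_cliqueFree_iff_top_isContained _).1 ht.not_cliqueFree)

theorem s_eq_max_of_isSeparation (hΩ : ∀ n : ℕ, S.Ω n = Kn n)
    (hP : ∀ {n : ℕ} {A B : GrphM} (g : S.Ω n ⟶ A) (h : S.Ω n ⟶ B),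
      IsPushout (C := Grph) g.1 h.1 (S.inl g h).1 (S.inr g h).1)
    {V : Type} [Finite V] {G : SimpleGraph V} {X Y : Set V} (hsep : IsSeparation G X Y)
    (hclique : G.IsClique (X ∩ Y)) :
    F.s (GrphM.of G) = max (F.s (GrphM.of (G.induce X))) (F.s (GrphM.of (G.induce Y))) := by
  obtain ⟨φ⟩ : Nonempty (S.Ω (Nat.card ↥(X ∩ Y)) ≅ GrphM.of (G.induce (X ∩ Y))) := by
    rw [hΩ, SimpleGraph.induce_eq_top.2 hclique]
    exact GrphM.nonempty_iso_Kn_card _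
  let i := φ.hom ≫ GrphM.induceHomOfLE G Set.inter_subset_left
  let j := φ.hom ≫ GrphM.induceHomOfLE G Set.inter_subset_right
  have hpushout : IsPushout (GrphM.toGrph.map i) (GrphM.toGrph.map j)
      (Grph.induceHom G X) (Grph.induceHom G Y) :=
    (Grph.isPushout_of_isSeparation hsep).of_iso' (GrphM.toGrph.mapIso φ)
      (Iso.refl _) (Iso.refl _) (Iso.refl _) rfl rfl rfl rfl
  rw [← F.pp i j]
  exact F.s_eq_of_iso (hpushout.isoIsPushout _ _ (hP i j))

theorem s_le_cliqueNum_of_isChordal (hΩ : ∀ n : ℕ, S.Ω n = Kn n)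
    (hP : ∀ {n : ℕ} {A B : GrphM} (g : S.Ω n ⟶ A) (h : S.Ω n ⟶ B),
      IsPushout (C := Grph) g.1 h.1 (S.inl g h).1 (S.inr g h).1)
    {V : Type} [Finite V] {G : SimpleGraph V} (hG : G.IsChordal) :
    F.s (GrphM.of G) ≤ G.cliqueNum := by
  refine isChordal_induction (motive := fun V _ G ↦ F.s (GrphM.of G) ≤ G.cliqueNum) ?_ ?_ hG
  · intro V _
    have := Fintype.ofFinite V
    have hclique : (⊤ : SimpleGraph V).IsClique (Finset.univ : Finset V) := fun _ _ _ _ ↦ id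
    rw [F.s_top hΩ, Nat.card_eq_fintype_card]
    exact hclique.card_le_cliqueNum
  · intro V _ G X Y hsep hclique hX hY
    rw [F.s_eq_max_of_isSeparation hΩ hP hsep hclique]
    exact max_le (hX.trans (G.cliqueNum_induce_le X)) (hY.trans (G.cliqueNum_induce_le Y))

end SFunctor

/-- In `Grph_m`, every chordal graph is pseudo-chordal: all S-functors assign
it its clique number. -/
theorem chordal_pseudoChordal (S : SpinedStruct GrphM)
    (hΩ : ∀ n : ℕ, S.Ω n = Kn n)
    (hP : ∀ {n : ℕ} {A B : GrphM} (g : S.Ω n ⟶ A) (h : S.Ω n ⟶ B),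
      IsPushout (C := Grph) g.1 h.1 (S.inl g h).1 (S.inr g h).1)
    (A : GrphM) (hA : (Grph.G A).IsChordal) :
    ∀ F : SFunctor S, F.s A = cliqueNumM A := by
  intro F
  have : Fintype (Grph.V A) := Grph.fin A
  have upper : F.s A ≤ cliqueNumM A := calc
    F.s A ≤ F.s (GrphM.of (Grph.G A)) := F.s_le_of_isContained (.refl (Grph.G A))
    _ ≤ cliqueNumM A := F.s_le_cliqueNum_of_isChordal hΩ hP hA
  exact upper.antisymm (F.cliqueNumM_le_s hΩ A)
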